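/- Let I ⊆ A = K[x_1,…,x_n] be a nonzero monomial ideal with ext(I) = {a_1,…,a_r}. Then for every integer m ≥ 1, the extreme points of conv(I^m) are exactly {m·a_1,…,m·a_r}, and the ideal J^{[m]} = (x^{m a_1},…,x^{m a_r}) is the unique minimal monomial reduction ideal of I^m. -/

import Mathlib

open MvPolynomial Pointwise

attribute [local instance] Classical.propDecidable

noncomputable section

/-- The real exponent vector of a monomial exponent `a : Fin n →₀ ℕ`. -/
def expVec {n : ℕ} (a : Fin n →₀ ℕ) : Fin n → ℝ := fun i => (a i : ℝ)

/-- The standard inner product on `ℝ^n`. -/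
def dotR {n : ℕ} (u v : Fin n → ℝ) : ℝ := ∑ i, u i * v i

/-- A monomial ideal: an ideal generated by a set of monomials. -/
def IsMonomialIdeal {K : Type*} [Field K] {n : ℕ} (I : Ideal (MvPolynomial (Fin n) K)) : Prop :=
  ∃ S : Set (Fin n →₀ ℕ), I = Ideal.span ((fun a => (monomial a (1 : K))) '' S)

/-- The Newton polyhedron of an ideal: the convex hull of the exponent vectors of the
monomials belonging to the ideal. -/
def newtonPolyhedron {K : Type*} [Field K] {n : ℕ} (I : Ideal (MvPolynomial (Fin n) K)) :
    Set (Fin n → ℝ) :=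
  convexHull ℝ {v | ∃ a : Fin n →₀ ℕ, monomial a (1 : K) ∈ I ∧ v = expVec a}

/-- The hyperplane `{v : ⟨u,v⟩ = c}` is a supporting hyperplane of `C`:
`C ⊆ {v : ⟨u,v⟩ ≥ c}` and the hyperplane meets `C`. -/
def IsSupp {n : ℕ} (C : Set (Fin n → ℝ)) (u : Fin n → ℝ) (c : ℝ) : Prop :=
  (∀ v ∈ C, c ≤ dotR u v) ∧ ∃ v ∈ C, dotR u v = c

/-- `F` is a proper face of `C`: `F = S ∩ C` for some supporting hyperplane `S`, `F ≠ C`. -/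
def IsProperFace {n : ℕ} (C F : Set (Fin n → ℝ)) : Prop :=
  ∃ u c, u ≠ 0 ∧ IsSupp C u c ∧ F = {v ∈ C | dotR u v = c} ∧ F ≠ C

/-- A compact face is a proper face that is compact. -/
def IsCompactFace {n : ℕ} (C F : Set (Fin n → ℝ)) : Prop :=
  IsProperFace C F ∧ IsCompact F

/-- A maximal compact face: a compact face maximal under inclusion. -/
def IsMaxCompactFace {n : ℕ} (C F : Set (Fin n → ℝ)) : Prop :=
  IsCompactFace C F ∧ ∀ G, IsCompactFace C G → F ⊆ G → F = G

/-- The graded maximal ideal `(x_1, …, x_n)` of `K[x_1, …, x_n]`. -/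
def maxIdeal (K : Type*) [Field K] (n : ℕ) : Ideal (MvPolynomial (Fin n) K) :=
  Ideal.span (Set.range fun i => (X i : MvPolynomial (Fin n) K))

/-- `f` is a minimal generator of the monomial ideal `L` if `f ∈ L` and `f ∉ (x_1,…,x_n)·L`. -/
def IsMinGen {K : Type*} [Field K] {n : ℕ} (L : Ideal (MvPolynomial (Fin n) K))
    (f : MvPolynomial (Fin n) K) : Prop :=
  f ∈ L ∧ f ∉ maxIdeal K n * L

/-- `L` is a reduction ideal of `I`: `L ⊆ I` and `L·I^{m-1} = I^m` for some `m ≥ 1`. -/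
def IsReduction {K : Type*} [Field K] {n : ℕ} (L I : Ideal (MvPolynomial (Fin n) K)) : Prop :=
  L ≤ I ∧ ∃ m : ℕ, 1 ≤ m ∧ L * I ^ (m - 1) = I ^ m

/-
The Newton polyhedron of a monomial ideal turns products into Minkowski sums, so `conv(I ^ m)` is
the dilate `m • conv(I)`; this gives the extreme points. An extreme point of `conv(I)` cannot be
written as a proper convex combination, so if `L * I ^ k = I ^ (k + 1)` then splitting a high power
of an extreme monomial forces that monomial into `L`. Conversely, `conv(I)` is contained in the
convex hull of its extreme points plus the positive orthant, because a finite generating set can be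
thinned out until each of its members is extreme. Rounding the real weights in such a convex
combination, and using Dickson's lemma to absorb the rounding errors, shows that every monomial of
`I` is integral over the ideal of the extreme monomials, which is therefore a reduction.
-/

section UpperHull

section Semiring

variable {𝕜 E : Type*} [Semiring 𝕜] [PartialOrder 𝕜] [AddCommMonoid E] [PartialOrder E]
  [Module 𝕜 E]

/-- The upper closure of the convex hull of `s`. In `ℝ^n` with the coordinatewise order this is the
Minkowski sum of the convex hull of `s` and the positive orthant, i.e. the Newton polyhedron of the
monomial ideal whose generators have exponents `s`. -/
def upperHull (𝕜 : Type*) {E : Type*} [Semiring 𝕜] [PartialOrder 𝕜] [AddCommMonoid E]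
    [PartialOrder E] [Module 𝕜 E] (s : Set E) : Set E :=
  upperClosure (convexHull 𝕜 s)

lemma subset_upperHull (s : Set E) : s ⊆ upperHull 𝕜 s :=
  (subset_convexHull 𝕜 s).trans subset_upperClosure

lemma upperHull_mono {s t : Set E} (h : s ⊆ t) : upperHull 𝕜 s ⊆ upperHull 𝕜 t :=
  upperClosure_anti (convexHull_mono h)

variable [IsOrderedAddMonoid E] [PosSMulMono 𝕜 E]

lemma convex_upperHull (s : Set E) : Convex 𝕜 (upperHull 𝕜 s) := by
  rintro x ⟨p, hp, hpx⟩ y ⟨q, hq, hqy⟩ a b ha hb hab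
  exact ⟨a • p + b • q, convex_convexHull 𝕜 s hp hq ha hb hab,
    add_le_add (smul_le_smul_of_nonneg_left hpx ha) (smul_le_smul_of_nonneg_left hqy hb)⟩

lemma upperHull_subset_upperHull {s t : Set E} (h : s ⊆ upperHull 𝕜 t) :
    upperHull 𝕜 s ⊆ upperHull 𝕜 t :=
  upperClosure_min (convexHull_min h (convex_upperHull t)) (upperClosure _).upper

end Semiring

variable {𝕜 E : Type*} [Field 𝕜] [LinearOrder 𝕜] [IsStrictOrderedRing 𝕜] [AddCommGroup E]
  [PartialOrder E] [IsOrderedAddMonoid E] [Module 𝕜 E] [PosSMulMono 𝕜 E]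

lemma mem_extremePoints_Ici (t : E) : t ∈ (Set.Ici t).extremePoints 𝕜 := by
  refine ⟨Set.self_mem_Ici, ?_⟩
  rintro x (hx : t ≤ x) y (hy : t ≤ y) ⟨a, b, ha, hb, hab, hxy⟩
  have : a • x + b • t ≤ a • t + b • t := by
    calc a • x + b • t ≤ a • x + b • y := by gcongr
      _ = a • t + b • t := by rw [hxy, ← add_smul, hab, one_smul]
  exact (le_of_smul_le_smul_left (le_of_add_le_add_right this) ha).antisymm hx

/-- Write `p = t + μ • (u - t)` and `q = t + ν • (v - t)` with `u` and `v` in the convex hull of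
`s`; unless `μ = ν = 0`, a suitable convex combination of `u` and `v` lies below `t`. -/
lemma eq_of_openSegment_le_of_notMem_upperHull {s : Set E} {t p q : E} (ht : t ∉ upperHull 𝕜 s)
    (hp : p ∈ convexHull 𝕜 (insert t s)) (hq : q ∈ convexHull 𝕜 (insert t s)) {a b : 𝕜}
    (ha : 0 < a) (hb : 0 < b) (hab : a + b = 1) (hle : a • p + b • q ≤ t) : p = t ∧ q = t := by
  rcases s.eq_empty_or_nonempty with rfl | hs
  · simp_all
  simp only [convexHull_insert hs, convexJoin_singleton_left, Set.mem_iUnion₂] at hp hq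
  obtain ⟨u, hu, α, μ, hα, hμ, hαμ, rfl⟩ := hp
  obtain ⟨v, hv, β, ν, hβ, hν, hβν, rfl⟩ := hq
  have hsum : (a * μ) • u + (b * ν) • v ≤ (a * μ + b * ν) • t := by
    have hcoeff : a * α + b * β + (a * μ + b * ν) = 1 := by
      linear_combination a * hαμ + b * hβν + hab
    refine le_of_add_le_add_left (a := (a * α + b * β) • t) ?_
    calc (a * α + b * β) • t + ((a * μ) • u + (b * ν) • v)
        = a • (α • t + μ • u) + b • (β • t + ν • v) := by module
      _ ≤ t := hle
      _ = (a * α + b * β) • t + (a * μ + b * ν) • t := by rw [← add_smul, hcoeff, one_smul]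
  rcases (by positivity : 0 ≤ a * μ + b * ν).eq_or_lt with h0 | hpos
  · have hμ0 : μ = 0 := by nlinarith
    have hν0 : ν = 0 := by nlinarith
    obtain rfl : α = 1 := by linarith
    obtain rfl : β = 1 := by linarith
    simp only [hμ0, hν0, one_smul, zero_smul, add_zero, and_self]
  · refine absurd ⟨_, (convex_convexHull 𝕜 s) hu hv (a := a * μ / (a * μ + b * ν))
      (b := b * ν / (a * μ + b * ν)) (by positivity) (by positivity) ?_, ?_⟩ ht
    · rw [← add_div, div_self hpos.ne']
    · refine le_of_smul_le_smul_left ?_ hpos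
      simpa only [smul_add, smul_smul, mul_div_cancel₀ _ hpos.ne'] using hsum

lemma mem_extremePoints_upperHull_insert {s : Set E} {t : E} (ht : t ∉ upperHull 𝕜 s) :
    t ∈ (upperHull 𝕜 (insert t s)).extremePoints 𝕜 := by
  refine ⟨subset_upperHull _ (Set.mem_insert t s), ?_⟩
  rintro x ⟨p, hp, hpx⟩ y ⟨q, hq, hqy⟩ hxy
  obtain ⟨a, b, ha, hb, hab, hxyt⟩ := id hxy
  have hle : a • p + b • q ≤ t := by rw [← hxyt]; gcongr
  obtain ⟨rfl, rfl⟩ := eq_of_openSegment_le_of_notMem_upperHull ht hp hq ha hb hab hle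
  exact (mem_extremePoints_Ici _).2 hpx hqy hxy

lemma upperHull_inter_extremePoints {s : Set E} (hs : s.Finite) :
    upperHull 𝕜 (s ∩ (upperHull 𝕜 s).extremePoints 𝕜) = upperHull 𝕜 s := by
  refine (upperHull_mono Set.inter_subset_left).antisymm ?_
  lift s to Finset E using hs
  induction s using Finset.strongInduction with
  | H s ih =>
    by_cases hred : ∃ t ∈ s, t ∈ upperHull 𝕜 (s.erase t : Set E)
    · obtain ⟨t, hts, ht⟩ := hred
      have hsub : (s.erase t : Set E) ⊆ s := Finset.coe_subset.2 (s.erase_subset t)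
      have heq : upperHull 𝕜 (s.erase t : Set E) = upperHull 𝕜 (s : Set E) := by
        refine (upperHull_mono hsub).antisymm (upperHull_subset_upperHull ?_)
        rw [← Finset.insert_erase hts, Finset.coe_insert, Set.insert_subset_iff]
        rw [Finset.erase_insert (s.notMem_erase t)]
        exact ⟨ht, subset_upperHull _⟩
      have ih' := ih _ (Finset.erase_ssubset hts)
      rw [heq] at ih'
      exact ih'.trans (upperHull_mono (Set.inter_subset_inter_left _ hsub))
    · push Not at hred
      refine upperHull_mono fun t ht ↦ ⟨ht, ?_⟩
      have := mem_extremePoints_upperHull_insert (hred t ht)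
      rwa [← Finset.coe_insert, Finset.insert_erase ht] at this

end UpperHull

section Reduction

variable {R : Type*} [CommSemiring R] {I J A B : Ideal R}

lemma sup_pow_succ_le_mul_pow (hA : A ≤ I) (hB : B ≤ I) {p q : ℕ}
    (hAp : A ^ (p + 1) ≤ J * I ^ p) (hBq : B ^ (q + 1) ≤ J * I ^ q) :
    (A ⊔ B) ^ (p + q + 1) ≤ J * I ^ (p + q) := by
  have absorb {C D : Ideal R} (hC : C ≤ I) (hD : D ≤ I) {r i j : ℕ}
      (hCr : C ^ (r + 1) ≤ J * I ^ r) (hri : r + 1 ≤ i) (hij : i + j = p + q + 1) :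
      C ^ i * D ^ j ≤ J * I ^ (p + q) := by
    obtain ⟨l, rfl⟩ := Nat.exists_eq_add_of_le hri
    calc C ^ (r + 1 + l) * D ^ j = C ^ (r + 1) * (C ^ l * D ^ j) := by rw [pow_add, mul_assoc]
      _ ≤ J * I ^ r * (I ^ l * I ^ j) := by gcongr
      _ = J * I ^ (p + q) := by
        rw [mul_assoc, ← pow_add, ← pow_add]; congr 2; omega
  rw [← Ideal.add_eq_sup, (Commute.all A B).add_pow']
  refine Finset.sum_induction _ (· ≤ J * I ^ (p + q)) (fun _ _ ↦ sup_le) bot_le ?_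
  rintro ⟨i, j⟩ hij
  rw [Finset.HasAntidiagonal.mem_antidiagonal] at hij
  rw [nsmul_eq_mul]
  refine Ideal.mul_le_right.trans ?_
  rcases le_or_gt (p + 1) i with hi | hi
  · exact absorb hA hB hAp hi hij
  · rw [mul_comm]
    exact absorb hB hA hBq (by omega) ((add_comm j i).trans hij)

lemma exists_span_pow_succ_le_mul_pow (F : Finset R) (hF : ∀ f ∈ F, f ∈ I)
    (h : ∀ f ∈ F, ∃ N, f ^ (N + 1) ∈ J * I ^ N) :
    ∃ N, Ideal.span (F : Set R) ^ (N + 1) ≤ J * I ^ N := by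
  induction F using Finset.induction_on with
  | empty => exact ⟨0, by simp⟩
  | insert f F _ ih =>
    rw [Finset.forall_mem_insert] at hF h
    obtain ⟨q, hq⟩ := ih hF.2 h.2
    obtain ⟨p, hp⟩ := h.1
    rw [Finset.coe_insert, Ideal.span_insert]
    refine ⟨p + q, sup_pow_succ_le_mul_pow ?_ (Ideal.span_le.2 hF.2) ?_ hq⟩
    · exact (Ideal.span_singleton_le_iff_mem I).2 hF.1
    · rwa [Ideal.span_singleton_pow, Ideal.span_singleton_le_iff_mem]

end Reduction

section Rounding

variable {𝕜 ι σ : Type*} [Semifield 𝕜] [LinearOrder 𝕜] [IsStrictOrderedRing 𝕜] [FloorSemiring 𝕜]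
  [Fintype ι] {w : ι → 𝕜} {s : ι → σ →₀ ℕ} {a : σ →₀ ℕ}

lemma sum_floor_nsmul_le (hw : ∀ i, 0 ≤ w i) (h : ∀ j, ∑ i, w i * s i j ≤ a j) (N : ℕ) :
    ∑ i, ⌊N * w i⌋₊ • s i ≤ N • a := fun j ↦ by
  have : ∑ i, (⌊N * w i⌋₊ : 𝕜) * s i j ≤ N * a j := by
    calc ∑ i, (⌊N * w i⌋₊ : 𝕜) * s i j ≤ ∑ i, N * w i * s i j := by
          gcongr with i
          exact Nat.floor_le (mul_nonneg N.cast_nonneg (hw i))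
      _ = N * ∑ i, w i * s i j := by simp only [Finset.mul_sum, mul_assoc]
      _ ≤ N * a j := by gcongr; exact h j
  simp only [Finsupp.finsetSum_apply, Finsupp.smul_apply, smul_eq_mul]
  exact_mod_cast this

lemma le_sum_floor_add_card (hw : 1 ≤ ∑ i, w i) (N : ℕ) :
    N ≤ ∑ i, ⌊N * w i⌋₊ + Fintype.card ι := by
  have : (N : 𝕜) ≤ ∑ i, ((⌊N * w i⌋₊ : 𝕜) + 1) := by
    calc (N : 𝕜) ≤ N * ∑ i, w i := le_mul_of_one_le_right N.cast_nonneg hw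
      _ = ∑ i, N * w i := Finset.mul_sum ..
      _ ≤ ∑ i, ((⌊N * w i⌋₊ : 𝕜) + 1) := by gcongr with i; exact (Nat.lt_floor_add_one _).le
  rw [Finset.sum_add_distrib, Finset.sum_const, Finset.card_univ, nsmul_one] at this
  exact_mod_cast this

/-- The weights `N * w i` are rounded down. Dickson's lemma provides two values of `N` whose
remainders are comparable, and the difference of the two inequalities is free of rounding errors. -/
lemma exists_nat_weights [Finite σ] (hw : ∀ i, 0 ≤ w i) (hw1 : 1 ≤ ∑ i, w i)
    (h : ∀ j, ∑ i, w i * s i j ≤ a j) :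
    ∃ N, 0 < N ∧ ∃ k : ι → ℕ, N ≤ ∑ i, k i ∧ ∑ i, k i • s i ≤ N • a := by
  let k (N : ℕ) (i : ι) : ℕ := ⌊N * w i⌋₊
  have hk_le (N : ℕ) : ∑ i, k N i • s i ≤ N • a := sum_floor_nsmul_le hw h N
  have le_hk (N : ℕ) : N ≤ ∑ i, k N i + Fintype.card ι := le_sum_floor_add_card hw1 N
  obtain ⟨p, q, hpq, hvec, hnum⟩ := wellQuasiOrdered_le fun N ↦
    (N • a - ∑ i, k N i • s i, ∑ i, k N i + Fintype.card ι - N)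
  have hk_mono (i : ι) : k p i ≤ k q i := by
    have := hw i
    exact Nat.floor_mono (by gcongr)
  refine ⟨q - p, by omega, fun i ↦ k q i - k p i, ?_, fun j ↦ ?_⟩
  · have := le_hk p
    have := le_hk q
    rw [Finset.sum_tsub_distrib _ fun i _ ↦ hk_mono i]
    dsimp only at hnum
    omega
  · have hp := hk_le p j
    have hq := hk_le q j
    have hj := hvec j
    simp only [Finsupp.finsetSum_apply, Finsupp.smul_apply, smul_eq_mul, Finsupp.tsub_apply]
      at hp hq hj ⊢
    simp only [Nat.sub_mul]
    rw [Finset.sum_tsub_distrib _ fun i _ ↦ Nat.mul_le_mul_right _ (hk_mono i)]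
    omega

end Rounding

section MonomialIdeal

variable (R : Type*) {σ : Type*} [CommSemiring R]

/-- The ideal generated by the monomials with exponent in `S`. -/
def monomialIdeal (S : Set (σ →₀ ℕ)) : Ideal (MvPolynomial σ R) :=
  Ideal.span ((fun a ↦ monomial a (1 : R)) '' S)

variable {R}

lemma monomial_mem_monomialIdeal_of_mem {S : Set (σ →₀ ℕ)} {a : σ →₀ ℕ} (ha : a ∈ S) :
    monomial a (1 : R) ∈ monomialIdeal R S :=
  Ideal.subset_span (Set.mem_image_of_mem _ ha)

lemma monomialIdeal_le {S : Set (σ →₀ ℕ)} {I : Ideal (MvPolynomial σ R)} :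
    monomialIdeal R S ≤ I ↔ ∀ a ∈ S, monomial a (1 : R) ∈ I :=
  Ideal.span_le.trans Set.forall_mem_image

lemma monomial_mem_monomialIdeal [Nontrivial R] {S : Set (σ →₀ ℕ)} {a : σ →₀ ℕ} :
    monomial a (1 : R) ∈ monomialIdeal R S ↔ ∃ s ∈ S, s ≤ a := by
  rw [monomialIdeal, mem_ideal_span_monomial_image]
  simp [support_monomial]

lemma monomialIdeal_mul (S T : Set (σ →₀ ℕ)) :
    monomialIdeal R S * monomialIdeal R T = monomialIdeal R (S + T) := by
  rw [monomialIdeal, monomialIdeal, monomialIdeal, Ideal.span_mul_span']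
  congr 1
  exact (Set.image_image2_distrib fun a b ↦ by simp [monomial_mul]).symm

lemma exists_finset_monomialIdeal_eq {R : Type*} [CommRing R] [IsNoetherianRing R] [Finite σ]
    (S : Set (σ →₀ ℕ)) : ∃ G : Finset (σ →₀ ℕ), monomialIdeal R S = monomialIdeal R G := by
  obtain ⟨F, hFS, hF⟩ := (Submodule.fg_span_iff_fg_span_finset_subset _).1
    (IsNoetherian.noetherian (monomialIdeal R S))
  obtain ⟨G, -, rfl⟩ := Finset.subset_set_image_iff.1 hFS
  exact ⟨G, by rwa [Finset.coe_image] at hF⟩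

lemma monomial_nsmul_eq_pow (N : ℕ) (a : σ →₀ ℕ) :
    monomial (N • a) (1 : R) = monomial a 1 ^ N := by
  rw [monomial_pow, one_pow]

end MonomialIdeal

section NewtonPolyhedron

variable {K : Type*} [Field K] {n : ℕ}

lemma IsMonomialIdeal.mul {I J : Ideal (MvPolynomial (Fin n) K)} (hI : IsMonomialIdeal I)
    (hJ : IsMonomialIdeal J) : IsMonomialIdeal (I * J) := by
  obtain ⟨S, rfl⟩ := hI
  obtain ⟨T, rfl⟩ := hJ
  exact ⟨S + T, monomialIdeal_mul S T⟩

lemma IsMonomialIdeal.pow {I : Ideal (MvPolynomial (Fin n) K)} (hI : IsMonomialIdeal I) (k : ℕ) :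
    IsMonomialIdeal (I ^ k) := by
  induction k with
  | zero => exact ⟨{0}, by simp⟩
  | succ k ih => exact pow_succ I k ▸ ih.mul hI

lemma IsMonomialIdeal.monomial_mem_mul_iff {I J : Ideal (MvPolynomial (Fin n) K)}
    (hI : IsMonomialIdeal I) (hJ : IsMonomialIdeal J) {c : Fin n →₀ ℕ} :
    monomial c (1 : K) ∈ I * J ↔
      ∃ a b, monomial a (1 : K) ∈ I ∧ monomial b (1 : K) ∈ J ∧ a + b = c := by
  constructor
  · intro hc
    obtain ⟨S, rfl⟩ := hI
    obtain ⟨T, rfl⟩ := hJ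
    change _ ∈ monomialIdeal K S * monomialIdeal K T at hc
    rw [monomialIdeal_mul, monomial_mem_monomialIdeal] at hc
    obtain ⟨_, ⟨a, ha, b, hb, rfl⟩, hle⟩ := hc
    refine ⟨a, c - a, monomial_mem_monomialIdeal_of_mem ha, monomial_mem_monomialIdeal.2
      ⟨b, hb, le_tsub_of_add_le_left hle⟩, add_tsub_cancel_of_le (le_self_add.trans hle)⟩
  · rintro ⟨a, b, ha, hb, rfl⟩
    simpa only [monomial_mul, one_mul] using Ideal.mul_mem_mul ha hb

lemma IsMonomialIdeal.exists_finset_eq_monomialIdeal {I : Ideal (MvPolynomial (Fin n) K)}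
    (hI : IsMonomialIdeal I) : ∃ G : Finset (Fin n →₀ ℕ), I = monomialIdeal K G := by
  obtain ⟨S, rfl⟩ := hI
  exact exists_finset_monomialIdeal_eq S

lemma expVec_injective : Function.Injective (expVec (n := n)) := fun a b h ↦ by
  ext i
  exact Nat.cast_injective (R := ℝ) (congrFun h i)

lemma expVec_add (a b : Fin n →₀ ℕ) : expVec (a + b) = expVec a + expVec b := by
  ext i
  simp [expVec]

lemma expVec_nsmul (m : ℕ) (a : Fin n →₀ ℕ) : expVec (m • a) = (m : ℝ) • expVec a := by
  ext i
  simp [expVec]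

lemma monotone_expVec : Monotone (expVec (n := n)) := fun _ _ h i ↦ Nat.cast_le.2 (h i)

variable {I J : Ideal (MvPolynomial (Fin n) K)}

lemma convex_newtonPolyhedron (I : Ideal (MvPolynomial (Fin n) K)) :
    Convex ℝ (newtonPolyhedron I) :=
  convex_convexHull ℝ _

lemma expVec_mem_newtonPolyhedron {a : Fin n →₀ ℕ} (ha : monomial a (1 : K) ∈ I) :
    expVec a ∈ newtonPolyhedron I :=
  subset_convexHull ℝ _ ⟨a, ha, rfl⟩

lemma extremePoints_newtonPolyhedron_subset (I : Ideal (MvPolynomial (Fin n) K)) :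
    (newtonPolyhedron I).extremePoints ℝ ⊆ expVec '' {a | monomial a (1 : K) ∈ I} := by
  refine extremePoints_convexHull_subset.trans ?_
  rintro _ ⟨a, ha, rfl⟩
  exact Set.mem_image_of_mem expVec ha

lemma monomial_mem_of_expVec_mem_extremePoints {a : Fin n →₀ ℕ}
    (ha : expVec a ∈ (newtonPolyhedron I).extremePoints ℝ) : monomial a (1 : K) ∈ I := by
  obtain ⟨b, hb, hba⟩ := extremePoints_newtonPolyhedron_subset I ha
  rwa [← expVec_injective hba]

lemma newtonPolyhedron_mul (hI : IsMonomialIdeal I) (hJ : IsMonomialIdeal J) :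
    newtonPolyhedron (I * J) = newtonPolyhedron I + newtonPolyhedron J := by
  rw [newtonPolyhedron, newtonPolyhedron, newtonPolyhedron, ← convexHull_add]
  congr 1
  ext v
  simp only [hI.monomial_mem_mul_iff hJ]
  constructor
  · rintro ⟨_, ⟨a, b, ha, hb, rfl⟩, rfl⟩
    exact ⟨_, ⟨a, ha, rfl⟩, _, ⟨b, hb, rfl⟩, (expVec_add a b).symm⟩
  · rintro ⟨_, ⟨a, ha, rfl⟩, _, ⟨b, hb, rfl⟩, rfl⟩
    exact ⟨a + b, ⟨a, b, ha, hb, rfl⟩, (expVec_add a b).symm⟩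

lemma newtonPolyhedron_pow (hI : IsMonomialIdeal I) {m : ℕ} (hm : 1 ≤ m) :
    newtonPolyhedron (I ^ m) = (m : ℝ) • newtonPolyhedron I := by
  induction m, hm using Nat.le_induction with
  | base => rw [pow_one, Nat.cast_one, one_smul]
  | succ k _ ih =>
    rw [pow_succ, newtonPolyhedron_mul (hI.pow k) hI, ih, Nat.cast_succ,
      (convex_newtonPolyhedron I).add_smul k.cast_nonneg zero_le_one, one_smul]

lemma extremePoints_newtonPolyhedron_pow (hI : IsMonomialIdeal I) {m : ℕ} (hm : 1 ≤ m) :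
    (newtonPolyhedron (I ^ m)).extremePoints ℝ =
      (fun v ↦ (m : ℝ) • v) '' (newtonPolyhedron I).extremePoints ℝ := by
  rw [newtonPolyhedron_pow hI hm]
  have hm0 : (m : ℝ) ≠ 0 := by positivity
  exact (image_extremePoints (LinearEquiv.smulOfNeZero ℝ (Fin n → ℝ) (m : ℝ) hm0) _).symm

lemma newtonPolyhedron_monomialIdeal_subset_upperHull (S : Set (Fin n →₀ ℕ)) :
    newtonPolyhedron (monomialIdeal K S) ⊆ upperHull ℝ (expVec '' S) := by
  refine convexHull_min ?_ (convex_upperHull _)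
  rintro _ ⟨a, ha, rfl⟩
  obtain ⟨s, hs, hsa⟩ := monomial_mem_monomialIdeal.1 ha
  exact (upperClosure _).upper (monotone_expVec hsa)
    (subset_upperHull _ (Set.mem_image_of_mem expVec hs))

lemma newtonPolyhedron_subset_upperHull_extremePoints (hI : IsMonomialIdeal I) :
    newtonPolyhedron I ⊆ upperHull ℝ ((newtonPolyhedron I).extremePoints ℝ) := by
  obtain ⟨G, rfl⟩ := hI.exists_finset_eq_monomialIdeal
  have hsub := newtonPolyhedron_monomialIdeal_subset_upperHull (K := K) (G : Set (Fin n →₀ ℕ))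
  have hgen : expVec '' G ⊆ newtonPolyhedron (monomialIdeal K (G : Set (Fin n →₀ ℕ))) :=
    Set.image_subset_iff.2 fun a ha ↦
      expVec_mem_newtonPolyhedron (monomial_mem_monomialIdeal_of_mem ha)
  refine hsub.trans ?_
  rw [← upperHull_inter_extremePoints (G.finite_toSet.image expVec)]
  exact upperHull_mono fun v hv ↦
    inter_extremePoints_subset_extremePoints_of_subset hsub ⟨hgen hv.1, hv.2⟩

end NewtonPolyhedron

section ExtremeIdeal

variable {K : Type*} [Field K] {n : ℕ} {I L : Ideal (MvPolynomial (Fin n) K)}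

/-- The ideal generated by the monomials of `I` whose exponents are extreme points of the Newton
polyhedron of `I`. -/
def extremeIdeal (I : Ideal (MvPolynomial (Fin n) K)) : Ideal (MvPolynomial (Fin n) K) :=
  monomialIdeal K (expVec ⁻¹' (newtonPolyhedron I).extremePoints ℝ)

lemma extremeIdeal_le (I : Ideal (MvPolynomial (Fin n) K)) : extremeIdeal I ≤ I :=
  monomialIdeal_le.2 fun _ ha ↦ monomial_mem_of_expVec_mem_extremePoints ha

lemma extremeIdeal_pow (hI : IsMonomialIdeal I) {m : ℕ} (hm : 1 ≤ m) :
    extremeIdeal (I ^ m) =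
      monomialIdeal K ((m • ·) '' (expVec ⁻¹' (newtonPolyhedron I).extremePoints ℝ)) := by
  rw [extremeIdeal, extremePoints_newtonPolyhedron_pow hI hm]
  congr 1
  ext b
  constructor
  · rintro ⟨v, hv, hvb⟩
    obtain ⟨a, -, rfl⟩ := extremePoints_newtonPolyhedron_subset I hv
    exact ⟨a, hv, expVec_injective ((expVec_nsmul m a).trans hvb)⟩
  · rintro ⟨a, ha, rfl⟩
    exact ⟨expVec a, ha, (expVec_nsmul m a).symm⟩

lemma isReduction_iff_exists_mul_pow_eq :
    IsReduction L I ↔ L ≤ I ∧ ∃ k, L * I ^ k = I ^ (k + 1) := by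
  refine and_congr_right fun _ ↦ ⟨?_, fun ⟨k, hk⟩ ↦ ⟨k + 1, k.succ_pos, hk⟩⟩
  rintro ⟨m, hm, h⟩
  obtain ⟨k, rfl⟩ := Nat.exists_eq_add_of_le' hm
  exact ⟨k, h⟩

lemma extremeIdeal_le_of_isReduction (hI : IsMonomialIdeal I) (hL : IsMonomialIdeal L)
    (hLI : IsReduction L I) : extremeIdeal I ≤ L := by
  obtain ⟨hle, k, hk⟩ := isReduction_iff_exists_mul_pow_eq.1 hLI
  refine monomialIdeal_le.2 fun a ha ↦ ?_
  rw [Set.mem_preimage] at ha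
  have hmem : monomial ((k + 2) • a) (1 : K) ∈ L * I ^ (k + 1) := by
    rw [pow_succ, ← mul_assoc, hk, ← pow_succ, monomial_nsmul_eq_pow]
    exact Ideal.pow_mem_pow (monomial_mem_of_expVec_mem_extremePoints ha) _
  obtain ⟨l, c, hl, hc, hlc⟩ := (hL.monomial_mem_mul_iff (hI.pow _)).1 hmem
  have hcP : expVec c ∈ ((k + 1 : ℕ) : ℝ) • newtonPolyhedron I := by
    rw [← newtonPolyhedron_pow hI k.succ_pos]
    exact expVec_mem_newtonPolyhedron hc
  obtain ⟨v, hv, hvc : ((k + 1 : ℕ) : ℝ) • v = expVec c⟩ := hcP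
  have hseg : expVec a ∈ openSegment ℝ (expVec l) v := by
    refine mem_openSegment_iff_div.2 ⟨1, (k + 1 : ℕ), one_pos, by positivity, ?_⟩
    have hsum : expVec l + ((k + 1 : ℕ) : ℝ) • v = ((k + 2 : ℕ) : ℝ) • expVec a := by
      rw [hvc, ← expVec_add, hlc, expVec_nsmul]
    have hk2 : (1 : ℝ) + (k + 1 : ℕ) = (k + 2 : ℕ) := by push_cast; ring
    rw [hk2, div_eq_inv_mul, div_eq_inv_mul, mul_smul, mul_smul, ← smul_add, one_smul, hsum,
      inv_smul_smul₀ (by positivity)]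
  have hla : expVec l = expVec a :=
    ha.2 (expVec_mem_newtonPolyhedron (hle hl)) hv hseg
  rwa [← expVec_injective hla]

lemma exists_monomial_pow_mem_monomialIdeal_pow {S : Set (Fin n →₀ ℕ)} {a : Fin n →₀ ℕ}
    (ha : expVec a ∈ upperHull ℝ (expVec '' S)) :
    ∃ N, monomial a (1 : K) ^ (N + 1) ∈ monomialIdeal K S ^ (N + 1) := by
  obtain ⟨p, hp, hpa⟩ := ha
  obtain ⟨ι, _, w, z, hw, hw1, hz, rfl⟩ := mem_convexHull_iff_exists_fintype.1 hp
  choose s hsS hsz using hz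
  obtain ⟨N, hN, k, hNk, hka⟩ := exists_nat_weights (s := s) (a := a) hw hw1.ge fun j ↦ by
    simpa [← hsz, expVec] using hpa j
  obtain ⟨N, rfl⟩ := Nat.exists_eq_add_one.2 hN
  refine ⟨N, ?_⟩
  have hprod : ∏ i, monomial (s i) (1 : K) ^ k i ∈ monomialIdeal K S ^ (N + 1) := by
    refine Ideal.pow_le_pow_right hNk ?_
    rw [← Finset.prod_pow_eq_pow_sum]
    exact Ideal.prod_mem_prod fun i _ ↦
      Ideal.pow_mem_pow (monomial_mem_monomialIdeal_of_mem (hsS i)) _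
  have hdvd : ∏ i, monomial (s i) (1 : K) ^ k i ∣ monomial a (1 : K) ^ (N + 1) := by
    simp only [← monomial_nsmul_eq_pow, ← monomial_sum_one]
    exact monomial_dvd_monomial.2 ⟨Or.inr hka, dvd_rfl⟩
  exact Ideal.mem_of_dvd _ hdvd hprod

lemma exists_monomial_pow_mem_extremeIdeal_mul_pow (hI : IsMonomialIdeal I) {a : Fin n →₀ ℕ}
    (ha : monomial a (1 : K) ∈ I) :
    ∃ N, monomial a (1 : K) ^ (N + 1) ∈ extremeIdeal I * I ^ N := by
  have hhull := newtonPolyhedron_subset_upperHull_extremePoints hI (expVec_mem_newtonPolyhedron ha)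
  have hrange : (newtonPolyhedron I).extremePoints ℝ ⊆ Set.range expVec :=
    (extremePoints_newtonPolyhedron_subset I).trans (Set.image_subset_range _ _)
  rw [← Set.image_preimage_eq_of_subset hrange] at hhull
  obtain ⟨N, hN⟩ := exists_monomial_pow_mem_monomialIdeal_pow (K := K) hhull
  have hle : extremeIdeal I ^ (N + 1) ≤ extremeIdeal I * I ^ N := by
    rw [pow_succ']
    gcongr
    exact extremeIdeal_le I
  exact ⟨N, hle hN⟩

lemma isReduction_extremeIdeal (hI : IsMonomialIdeal I) : IsReduction (extremeIdeal I) I := by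
  obtain ⟨G, hG⟩ := hI.exists_finset_eq_monomialIdeal
  have hmem (a) (ha : a ∈ G) : monomial a (1 : K) ∈ I :=
    hG ▸ monomial_mem_monomialIdeal_of_mem ha
  obtain ⟨N, hN⟩ := exists_span_pow_succ_le_mul_pow (I := I) (J := extremeIdeal I)
    (G.image fun a ↦ monomial a (1 : K)) (Finset.forall_mem_image.2 hmem)
    (Finset.forall_mem_image.2 fun a ha ↦
      exists_monomial_pow_mem_extremeIdeal_mul_pow hI (hmem a ha))
  rw [Finset.coe_image, ← monomialIdeal, ← hG] at hN
  refine isReduction_iff_exists_mul_pow_eq.2 ⟨extremeIdeal_le I, N, le_antisymm ?_ hN⟩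
  rw [pow_succ']
  gcongr
  exact extremeIdeal_le I

end ExtremeIdeal

theorem stmt3 {K : Type*} [Field K] {n : ℕ} (I : Ideal (MvPolynomial (Fin n) K))
    (hI : IsMonomialIdeal I) (hne : I ≠ ⊥) (m : ℕ) (hm : 1 ≤ m) :
    Set.extremePoints ℝ (newtonPolyhedron (I ^ m)) =
      (fun v => (m : ℝ) • v) '' Set.extremePoints ℝ (newtonPolyhedron I) ∧
    ∀ Jm : Ideal (MvPolynomial (Fin n) K),
      Jm = Ideal.span {f | ∃ a : Fin n →₀ ℕ,
          expVec a ∈ Set.extremePoints ℝ (newtonPolyhedron I) ∧ f = monomial (m • a) (1 : K)} →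
      IsReduction Jm (I ^ m) ∧
        ∀ L : Ideal (MvPolynomial (Fin n) K),
          IsMonomialIdeal L → IsReduction L (I ^ m) → Jm ≤ L := by
  have hext := extremePoints_newtonPolyhedron_pow hI hm
  refine ⟨hext, ?_⟩
  rintro Jm rfl
  have hJm : extremeIdeal (I ^ m) = Ideal.span {f | ∃ a : Fin n →₀ ℕ,
      expVec a ∈ Set.extremePoints ℝ (newtonPolyhedron I) ∧ f = monomial (m • a) (1 : K)} := by
    rw [extremeIdeal_pow hI hm, monomialIdeal, Set.image_image]
    congr 1
    ext f
    simp [eq_comm]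
  rw [← hJm]
  exact ⟨isReduction_extremeIdeal (hI.pow m),
    fun L hL hLI ↦ extremeIdeal_le_of_isReduction (hI.pow m) hL hLI⟩
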